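/- Let I ⊂ S = K[x_1,…,x_n] be a matroidal ideal generated in degree d with supp(I) = [n]. Then all squarefree powers of I have minimum depth: for every k with 1 ≤ k ≤ ν(I), one has depth(S/I^{[k]}) = kd − 1, i.e. g_I(k) = 0. -/

import Mathlib

open MvPolynomial

section Preamble

variable (K : Type*) [Field K] {σ : Type*} [Fintype σ] [DecidableEq σ]

/-- A (monic) monomial of the polynomial ring. -/
def IsMonomial (f : MvPolynomial σ K) : Prop :=
  ∃ d : σ →₀ ℕ, f = monomial d 1

/-- An ideal generated by monomials. -/
def IsMonomialIdeal (I : Ideal (MvPolynomial σ K)) : Prop :=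
  ∃ A : Set (MvPolynomial σ K), (∀ u ∈ A, IsMonomial K u) ∧ I = Ideal.span A

/-- The unique minimal set of monomial generators `G(I)` of a monomial ideal:
the monomials of `I` that are minimal with respect to divisibility. -/
def minGens (I : Ideal (MvPolynomial σ K)) : Set (MvPolynomial σ K) :=
  {u | IsMonomial K u ∧ u ∈ I ∧ ∀ v, IsMonomial K v → v ∈ I → v ∣ u → v = u}

/-- A squarefree monomial ideal. -/
def IsSqfreeMonomialIdeal (I : Ideal (MvPolynomial σ K)) : Prop :=
  IsMonomialIdeal K I ∧ ∀ u ∈ minGens K I, Squarefree u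

/-- The `k`-th squarefree power `I^{[k]}`: the ideal generated by the squarefree
products of `k` minimal monomial generators of `I`. -/
noncomputable def sqPow (I : Ideal (MvPolynomial σ K)) (k : ℕ) : Ideal (MvPolynomial σ K) :=
  Ideal.span {u | Squarefree u ∧ ∃ l : List (MvPolynomial σ K),
    l.length = k ∧ (∀ f ∈ l, f ∈ minGens K I) ∧ u = l.prod}

/-- `ν(I)`: the maximum length of a regular sequence of monomials in `I`. -/
noncomputable def monNu (I : Ideal (MvPolynomial σ K)) : ℕ :=
  sSup {m | ∃ l : List (MvPolynomial σ K), l.length = m ∧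
    (∀ f ∈ l, IsMonomial K f ∧ f ∈ I) ∧
    RingTheory.Sequence.IsRegular (MvPolynomial σ K) l}

/-- The minimal degree `d` of a minimal monomial generator of `I`
(so `d_k = minDeg (I^{[k]})`). -/
noncomputable def minDeg (I : Ideal (MvPolynomial σ K)) : ℕ :=
  sInf (totalDegree '' minGens K I)

/-- `depth(S/I)`: the maximum length of an `S/I`-regular sequence of elements of
the graded maximal ideal `(x_1, …, x_n)`. -/
noncomputable def qdepth (I : Ideal (MvPolynomial σ K)) : ℕ :=
  sSup {m | ∃ l : List (MvPolynomial σ K), l.length = m ∧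
    (∀ f ∈ l, f ∈ Ideal.span (Set.range (X : σ → MvPolynomial σ K))) ∧
    RingTheory.Sequence.IsRegular (MvPolynomial σ K ⧸ I) l}

/-- `I` has linear quotients with respect to the ordering `L` of its minimal
monomial generators: each successive colon ideal is generated by variables. -/
def HasLinearQuotientsOrder (I : Ideal (MvPolynomial σ K))
    (L : List (MvPolynomial σ K)) : Prop :=
  L.Nodup ∧ (∀ u, u ∈ L ↔ u ∈ minGens K I) ∧
  ∀ i : Fin L.length, 0 < (i : ℕ) →
    ∃ A : Set σ,
      Submodule.colon (Ideal.span {u | u ∈ L.take (i : ℕ)}) (Ideal.span {L.get i})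
        = Ideal.span (X '' A)

/-- A monomial ideal with linear quotients. -/
def HasLinearQuotients (I : Ideal (MvPolynomial σ K)) : Prop :=
  ∃ L, HasLinearQuotientsOrder K I L

/-- A polymatroidal ideal: a monomial ideal generated in a single degree whose
minimal generators satisfy the exchange property. -/
def IsPolymatroidal (I : Ideal (MvPolynomial σ K)) : Prop :=
  IsMonomialIdeal K I ∧
  (∃ d, ∀ u ∈ minGens K I, totalDegree u = d) ∧
  ∀ u ∈ minGens K I, ∀ v ∈ minGens K I, ∀ k : σ,
    degreeOf k v < degreeOf k u →
    ∃ l : σ, degreeOf l u < degreeOf l v ∧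
      ∃ w, u = X k * w ∧ X l * w ∈ minGens K I

/-- A matroidal ideal: a polymatroidal ideal all of whose minimal generators are
squarefree. -/
def IsMatroidal (I : Ideal (MvPolynomial σ K)) : Prop :=
  IsPolymatroidal K I ∧ ∀ u ∈ minGens K I, Squarefree u

/-- The squarefree part of a monomial ideal: the ideal generated by its squarefree
minimal generators. -/
noncomputable def sqfPart (I : Ideal (MvPolynomial σ K)) : Ideal (MvPolynomial σ K) :=
  Ideal.span {u | u ∈ minGens K I ∧ Squarefree u}

/-- The squarefree Veronese ideal `𝔪^{[d]}`, generated by all squarefree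
monomials of degree `d`. -/
noncomputable def veronese (d : ℕ) : Ideal (MvPolynomial σ K) :=
  Ideal.span {u | ∃ F : Finset σ, F.card = d ∧ u = ∏ i ∈ F, X i}

/-- A chordal graph: no induced cycle of length greater than 3. -/
def IsChordal {V : Type*} (G : SimpleGraph V) : Prop :=
  ∀ m : ℕ, 4 ≤ m → ¬ ∃ f : ZMod m → V, Function.Injective f ∧
    ∀ i j : ZMod m, G.Adj (f i) (f j) ↔ (i = j + 1 ∨ j = i + 1)

/-- A matching of `G`: a finite set of pairwise vertex-disjoint edges of `G`. -/
def IsMatching (G : SimpleGraph σ) (M : Finset (Sym2 σ)) : Prop :=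
  (↑M ⊆ G.edgeSet) ∧ (M : Set (Sym2 σ)).Pairwise fun e f => ∀ v, v ∈ e → v ∉ f

/-- A `k`-matching of `G`. -/
def IsKMatching (G : SimpleGraph σ) (M : Finset (Sym2 σ)) (k : ℕ) : Prop :=
  IsMatching G M ∧ M.card = k

/-- The vertex set `V(M)` of a matching. -/
def mVerts (M : Finset (Sym2 σ)) : Finset σ :=
  Finset.univ.filter fun v => ∃ e ∈ M, v ∈ e

/-- The squarefree monomial `∏_{v ∈ V(M)} x_v` attached to a matching. -/
noncomputable def matchMon (M : Finset (Sym2 σ)) : MvPolynomial σ K :=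
  ∏ v ∈ mVerts M, X v

/-- The edge ideal `I(G)` of a finite simple graph `G`. -/
noncomputable def edgeIdeal (G : SimpleGraph σ) : Ideal (MvPolynomial σ K) :=
  Ideal.span {u | ∃ i j, G.Adj i j ∧ u = X i * X j}

/-- The `k`-th squarefree power `I(G)^{[k]}` of the edge ideal, generated by the
monomials `∏_{v ∈ V(M)} x_v` of the `k`-matchings `M` of `G`. -/
noncomputable def matchPow (G : SimpleGraph σ) (k : ℕ) : Ideal (MvPolynomial σ K) :=
  Ideal.span {u | ∃ M : Finset (Sym2 σ), IsKMatching G M k ∧ u = matchMon K M}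

/-- The matching number `ν(G)`. -/
noncomputable def matchNum (G : SimpleGraph σ) : ℕ :=
  sSup {k | ∃ M : Finset (Sym2 σ), IsKMatching G M k}

end Preamble

section ExtPart
open CategoryTheory Abelian

universe u
variable {R : Type u} [CommRing R]

lemma ext_mid {N : ModuleCat.{u} R} {A B C : Type u} [AddCommGroup A] [Module R A] [AddCommGroup B]
    [Module R B] [AddCommGroup C] [Module R C] (f : A →ₗ[R] B) (g : B →ₗ[R] C)
    (hf : Function.Injective f) (hg : Function.Surjective g) (hfg : Function.Exact f g) (i : ℕ)
    (hA : Subsingleton (Ext N (ModuleCat.of R A) i))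
    (hC : Subsingleton (Ext N (ModuleCat.of R C) i)) :
    Subsingleton (Ext N (ModuleCat.of R B) i) := by
  have hS : (ModuleCat.shortComplexOfCompEqZero f g hfg.linearMap_comp_eq_zero).ShortExact :=
    { exact := ModuleCat.shortComplex_exact _ hfg
      mono_f := (ModuleCat.mono_iff_injective _).2 hf
      epi_g := (ModuleCat.epi_iff_surjective _).2 hg }
  refine subsingleton_of_forall_eq 0 fun x => ?_
  obtain ⟨y, rfl⟩ := Ext.covariant_sequence_exact₂ N hS x (@Subsingleton.elim _ hC _ _)
  rw [@Subsingleton.elim _ hA y 0]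
  exact Ext.zero_comp ..

lemma ext_right {N : ModuleCat.{u} R} {A B C : Type u} [AddCommGroup A] [Module R A]
    [AddCommGroup B]
    [Module R B] [AddCommGroup C] [Module R C] (f : A →ₗ[R] B) (g : B →ₗ[R] C)
    (hf : Function.Injective f) (hg : Function.Surjective g) (hfg : Function.Exact f g) (i : ℕ)
    (hA : Subsingleton (Ext N (ModuleCat.of R A) (i+1)))
    (hB : Subsingleton (Ext N (ModuleCat.of R B) i)) :
    Subsingleton (Ext N (ModuleCat.of R C) i) := by
  have hS : (ModuleCat.shortComplexOfCompEqZero f g hfg.linearMap_comp_eq_zero).ShortExact :=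
    { exact := ModuleCat.shortComplex_exact _ hfg
      mono_f := (ModuleCat.mono_iff_injective _).2 hf
      epi_g := (ModuleCat.epi_iff_surjective _).2 hg }
  refine subsingleton_of_forall_eq 0 fun x => ?_
  obtain ⟨y, rfl⟩ := Ext.covariant_sequence_exact₃ N hS x rfl (@Subsingleton.elim _ hA _ _)
  rw [@Subsingleton.elim _ hB y 0]
  exact Ext.zero_comp ..

lemma ext_zero_of_reg {N : ModuleCat.{u} R} {A : Type u} [AddCommGroup A] [Module R A]
    (x : R) (hx : x ∈ Module.annihilator R N) (hreg : IsSMulRegular A x) :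
    Subsingleton (Ext N (ModuleCat.of R A) 0) := by
  have : Subsingleton (N →ₗ[R] A) := IsSMulRegular.linearMap_subsingleton_of_mem_annihilator hreg hx
  exact (Ext.addEquiv₀.trans ModuleCat.homAddEquiv).subsingleton

lemma ext_succ_of_reg {N : ModuleCat.{u} R} {A C : Type u} [AddCommGroup A] [Module R A]
    [AddCommGroup C] [Module R C]
    (x : R) (hx : x ∈ Module.annihilator R N) (hreg : IsSMulRegular A x) (g : A →ₗ[R] C)
    (hg : Function.Surjective g) (hfg : Function.Exact (LinearMap.lsmul R A x) g) (i : ℕ)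
    (hC : Subsingleton (Ext N (ModuleCat.of R C) i)) :
    Subsingleton (Ext N (ModuleCat.of R A) (i+1)) := by
  have hS : (ModuleCat.shortComplexOfCompEqZero _ g hfg.linearMap_comp_eq_zero).ShortExact :=
    { exact := ModuleCat.shortComplex_exact _ hfg
      mono_f := (ModuleCat.mono_iff_injective _).2 hreg
      epi_g := (ModuleCat.epi_iff_surjective _).2 hg }
  refine subsingleton_of_forall_eq 0 fun z => ?_
  have h0 := Ext.postcomp_smul_id_eq_zero_of_mem_annihilator (M := ModuleCat.of R A) hx (i+1)
  obtain ⟨y, rfl⟩ := Ext.covariant_sequence_exact₁ N hS z (by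
    have := congrArg (fun f => f.hom z) h0
    exact this) rfl
  rw [@Subsingleton.elim _ hC y 0]
  exact Ext.zero_comp ..

lemma ext_prod {N : ModuleCat.{u} R} {A B : Type u} [AddCommGroup A] [Module R A] [AddCommGroup B]
    [Module R B] (i : ℕ)
    (hA : Subsingleton (Ext N (ModuleCat.of R A) i))
    (hB : Subsingleton (Ext N (ModuleCat.of R B) i)) :
    Subsingleton (Ext N (ModuleCat.of R (A × B)) i) :=
  ext_mid (LinearMap.inl R A B) (LinearMap.snd R A B) LinearMap.inl_injective
    LinearMap.snd_surjective Function.Exact.inl_snd i hA hB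

lemma ext_of_subsingleton {N : ModuleCat.{u} R} {A : Type u} [AddCommGroup A] [Module R A]
    [Subsingleton A] (i : ℕ) : Subsingleton (Ext N (ModuleCat.of R A) i) := by
  refine subsingleton_of_forall_eq 0 fun x => ?_
  have h : (𝟙 (ModuleCat.of R A)) = 0 := by
    ext a; exact Subsingleton.elim (α := A) _ _
  rw [← Ext.comp_mk₀_id x, h, Ext.mk₀_zero, Ext.comp_zero]

/-- Mayer-Vietoris for two ideals -/
lemma ext_mv {N : ModuleCat.{u} R} (I J : Ideal R) (i : ℕ)
    (hI : Subsingleton (Ext N (ModuleCat.of R (R ⧸ I)) i))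
    (hJ : Subsingleton (Ext N (ModuleCat.of R (R ⧸ J)) i))
    (h : Subsingleton (Ext N (ModuleCat.of R (R ⧸ (I ⊓ J))) (i+1))) :
    Subsingleton (Ext N (ModuleCat.of R (R ⧸ (I ⊔ J))) i) := by
  let f : (R ⧸ (I ⊓ J)) →ₗ[R] (R ⧸ I) × (R ⧸ J) :=
    LinearMap.prod (Submodule.factor inf_le_left) (Submodule.factor inf_le_right)
  let g : (R ⧸ I) × (R ⧸ J) →ₗ[R] (R ⧸ (I ⊔ J)) :=
    LinearMap.coprod (Submodule.factor le_sup_left) (-(Submodule.factor le_sup_right))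
  refine ext_right f g ?_ ?_ ?_ i h (ext_prod i hI hJ)
  · rw [← LinearMap.ker_eq_bot, LinearMap.ker_eq_bot']
    intro x hx
    obtain ⟨a, rfl⟩ := Submodule.Quotient.mk_surjective _ x
    have h1 : a ∈ I := (Submodule.Quotient.mk_eq_zero I).1 (congrArg Prod.fst hx)
    have h2 : a ∈ J := (Submodule.Quotient.mk_eq_zero J).1 (congrArg Prod.snd hx)
    exact (Submodule.Quotient.mk_eq_zero _).2 ⟨h1, h2⟩
  · intro x
    obtain ⟨a, rfl⟩ := Submodule.Quotient.mk_surjective _ x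
    refine ⟨(Submodule.Quotient.mk a, 0), ?_⟩
    simp [g]
  · rintro ⟨x, y⟩
    obtain ⟨a, rfl⟩ := Submodule.Quotient.mk_surjective _ x
    obtain ⟨b, rfl⟩ := Submodule.Quotient.mk_surjective _ y
    constructor
    · intro h
      have : a - b ∈ I ⊔ J := by
        rw [← Submodule.Quotient.mk_eq_zero, Submodule.Quotient.mk_sub, sub_eq_add_neg]
        exact h
      obtain ⟨c, hc, e, he, hce⟩ := Submodule.mem_sup.1 this
      refine ⟨Submodule.Quotient.mk (a - c), ?_⟩
      refine Prod.ext ?_ ?_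
      · refine (Submodule.Quotient.eq I).2 ?_
        simpa using hc
      · refine (Submodule.Quotient.eq J).2 ?_
        have : a - c - b = e := by rw [sub_right_comm, ← hce]; ring
        rw [LinearMap.id_apply, this]
        exact he
    · rintro ⟨z, hz⟩
      obtain ⟨c, rfl⟩ := Submodule.Quotient.mk_surjective _ z
      rw [← hz]
      change Submodule.Quotient.mk c + -Submodule.Quotient.mk c = (0 : R ⧸ (I ⊔ J))
      simp

/-- colon sequence -/
lemma ext_colon {N : ModuleCat.{u} R} (I I' J : Ideal R) (x : R) (i : ℕ)
    (h1 : ∀ a, a ∈ I' ↔ x * a ∈ I) (hJ : J = I ⊔ Ideal.span {x})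
    (hI : Subsingleton (Ext N (ModuleCat.of R (R ⧸ I')) i))
    (hJ' : Subsingleton (Ext N (ModuleCat.of R (R ⧸ J)) i)) :
    Subsingleton (Ext N (ModuleCat.of R (R ⧸ I)) i) := by
  subst hJ
  let f : (R ⧸ I') →ₗ[R] (R ⧸ I) :=
    Submodule.mapQ I' I (LinearMap.lsmul R R x) (fun a ha => (h1 a).1 ha)
  refine ext_mid f (Submodule.factor le_sup_left) ?_ ?_ ?_ i hI hJ'
  · rw [← LinearMap.ker_eq_bot, LinearMap.ker_eq_bot']
    intro y hy
    obtain ⟨a, rfl⟩ := Submodule.Quotient.mk_surjective _ y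
    exact (Submodule.Quotient.mk_eq_zero _).2
      ((h1 a).2 ((Submodule.Quotient.mk_eq_zero (x := x * a) I).1 hy))
  · exact Submodule.factor_surjective _
  · intro y
    obtain ⟨a, rfl⟩ := Submodule.Quotient.mk_surjective _ y
    constructor
    · intro h
      have : a ∈ I ⊔ Ideal.span {x} := by
        rw [← Submodule.Quotient.mk_eq_zero]
        exact h
      obtain ⟨c, hc, e, he, hce⟩ := Submodule.mem_sup.1 this
      obtain ⟨b, rfl⟩ := Ideal.mem_span_singleton.1 he
      refine ⟨Submodule.Quotient.mk b, ?_⟩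
      refine (Submodule.Quotient.eq (x := x * b) I).2 ?_
      rw [← hce]; simpa using hc
    · rintro ⟨z, hz⟩
      obtain ⟨c, rfl⟩ := Submodule.Quotient.mk_surjective _ z
      rw [← hz]
      refine (Submodule.Quotient.mk_eq_zero (x := x * c) (I ⊔ Ideal.span {x})).2 ?_
      exact Ideal.mem_sup_right (Ideal.mul_mem_right _ _ (Ideal.mem_span_singleton_self x))

lemma ext_reg_ideal {N : ModuleCat.{u} R} (I J : Ideal R) (x : R)
    (hx : x ∈ Module.annihilator R N) (i : ℕ)
    (h1 : ∀ a, a ∈ I ↔ x * a ∈ I) (hJ : J = I ⊔ Ideal.span {x})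
    (hJ' : ∀ j, j + 1 = i → Subsingleton (Ext N (ModuleCat.of R (R ⧸ J)) j)) :
    Subsingleton (Ext N (ModuleCat.of R (R ⧸ I)) i) := by
  subst hJ
  have hreg : IsSMulRegular (R ⧸ I) x := by
    rw [isSMulRegular_iff_right_eq_zero_of_smul]
    intro y hy
    obtain ⟨a, rfl⟩ := Submodule.Quotient.mk_surjective _ y
    exact (Submodule.Quotient.mk_eq_zero _).2
      ((h1 a).2 ((Submodule.Quotient.mk_eq_zero (x := x * a) I).1 hy))
  cases i with
  | zero => exact ext_zero_of_reg x hx hreg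
  | succ i =>
  refine ext_succ_of_reg x hx hreg (Submodule.factor le_sup_left) (Submodule.factor_surjective _)
    ?_ i (hJ' i rfl)
  · intro y
    obtain ⟨a, rfl⟩ := Submodule.Quotient.mk_surjective _ y
    constructor
    · intro h
      have : a ∈ I ⊔ Ideal.span {x} := by
        rw [← Submodule.Quotient.mk_eq_zero]
        exact h
      obtain ⟨c, hc, e, he, hce⟩ := Submodule.mem_sup.1 this
      obtain ⟨b, rfl⟩ := Ideal.mem_span_singleton.1 he
      refine ⟨Submodule.Quotient.mk b, ?_⟩
      refine (Submodule.Quotient.eq (x := x * b) I).2 ?_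
      rw [← hce]; simpa using hc
    · rintro ⟨z, hz⟩
      obtain ⟨c, rfl⟩ := Submodule.Quotient.mk_surjective _ z
      rw [← hz]
      refine (Submodule.Quotient.mk_eq_zero (x := x * c) (I ⊔ Ideal.span {x})).2 ?_
      exact Ideal.mem_sup_right (Ideal.mul_mem_right _ _ (Ideal.mem_span_singleton_self x))

end ExtPart

section MonPart
open CategoryTheory Abelian
universe u
variable (K : Type u) [Field K] {σ : Type} [Fintype σ] [DecidableEq σ]

/-- Squarefree monomial ideal of a family of subsets. -/
noncomputable def mI (P : Finset σ → Prop) : Ideal (MvPolynomial σ K) :=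
  Ideal.span ((fun m => monomial m (1 : K)) '' {m : σ →₀ ℕ | P m.support})

lemma mem_mI {P : Finset σ → Prop} (hP : Monotone P) (f : MvPolynomial σ K) :
    f ∈ mI K P ↔ ∀ m ∈ f.support, P m.support := by
  rw [mI, mem_ideal_span_monomial_image]
  constructor
  · intro h m hm
    obtain ⟨s, hs, hsm⟩ := h m hm
    exact hP (Finsupp.support_mono hsm) hs
  · intro h m hm
    exact ⟨m, h m hm, le_rfl⟩

lemma mI_sup (P Q : Finset σ → Prop) : mI K P ⊔ mI K Q = mI K (fun F => P F ∨ Q F) := by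
  rw [mI, mI, mI, ← Ideal.span_union, ← Set.image_union]
  rfl

lemma mI_inf {P Q : Finset σ → Prop} (hP : Monotone P) (hQ : Monotone Q) :
    mI K P ⊓ mI K Q = mI K (fun F => P F ∧ Q F) := by
  ext f
  have h : Monotone (fun F => P F ∧ Q F) := fun a b hab h => ⟨hP hab h.1, hQ hab h.2⟩
  rw [Submodule.mem_inf, mem_mI K hP, mem_mI K hQ, mem_mI K h]
  exact ⟨fun h m hm => ⟨h.1 m hm, h.2 m hm⟩, fun h => ⟨fun m hm => (h m hm).1, fun m hm => (h m hm).2⟩⟩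

lemma mI_X (x : σ) : Ideal.span {(X x : MvPolynomial σ K)} = mI K (fun F => x ∈ F) := by
  apply le_antisymm
  · rw [Ideal.span_le, Set.singleton_subset_iff]
    refine Ideal.subset_span ⟨Finsupp.single x 1, ?_, rfl⟩
    simp
  · rw [mI, Ideal.span_le]
    rintro _ ⟨m, hm, rfl⟩
    rw [SetLike.mem_coe, Ideal.mem_span_singleton]
    rw [X_dvd_monomial]
    right
    simpa using hm

lemma mI_colon {P P' : Finset σ → Prop} (hP : Monotone P) (hP' : Monotone P') (x : σ)
    (h : ∀ F, P' F ↔ P (insert x F)) (a : MvPolynomial σ K) :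
    a ∈ mI K P' ↔ X x * a ∈ mI K P := by
  rw [mem_mI K hP, mem_mI K hP', support_X_mul]
  simp only [Finset.mem_map, addLeftEmbedding_apply, forall_exists_index, and_imp,
    forall_apply_eq_imp_iff₂]
  refine forall₂_congr fun m _ => ?_
  rw [h]
  have : (Finsupp.single x 1 + m).support = insert x m.support := by
    ext y
    by_cases hy : y = x
    · subst hy; simp
    · simp [hy, Finsupp.single_apply, Ne.symm hy]
  rw [this]

/-- residue field -/
noncomputable abbrev resK : ModuleCat.{u} (MvPolynomial σ K) :=
  ModuleCat.of _ (MvPolynomial σ K ⧸ Ideal.span (Set.range (X : σ → MvPolynomial σ K)))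

lemma X_mem_ann (x : σ) : (X x : MvPolynomial σ K) ∈
    Module.annihilator (MvPolynomial σ K) (resK K (σ := σ)) := by
  have : Module.annihilator (MvPolynomial σ K) (resK K (σ := σ)) =
      Ideal.span (Set.range (X : σ → MvPolynomial σ K)) := Ideal.annihilator_quotient
  rw [this]
  exact Ideal.subset_span ⟨x, rfl⟩

/-- Ext vanishing in degree `i` -/
abbrev EV (P : Finset σ → Prop) (i : ℕ) : Prop :=
  Subsingleton (Ext (resK K (σ := σ)) (ModuleCat.of _ (MvPolynomial σ K ⧸ mI K P)) i)

lemma EV_congr {P Q : Finset σ → Prop} {i : ℕ} (h : ∀ F, P F ↔ Q F) (hP : EV K P i) :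
    EV K Q i := by
  have : P = Q := funext fun F => propext (h F)
  subst this
  exact hP

lemma ev_vars (s : ℕ) : ∀ (W : Finset σ), Wᶜ.card = s → ∀ i < s,
    EV K (fun F => ∃ x ∈ F, x ∈ W) i := by
  induction s with
  | zero => intro W _ i hi; omega
  | succ s ih =>
    intro W hW i hi
    obtain ⟨x, hx⟩ : (Wᶜ).Nonempty := by rw [← Finset.card_pos]; omega
    have hmono : Monotone (fun F : Finset σ => ∃ x ∈ F, x ∈ W) :=
      fun a b hab ⟨x, h1, h2⟩ => ⟨x, hab h1, h2⟩
    rw [Finset.mem_compl] at hx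
    refine ext_reg_ideal _ (mI K (fun F => ∃ y ∈ F, y ∈ insert x W)) (X x) (X_mem_ann K x) i ?_ ?_ ?_
    · refine mI_colon K hmono hmono x fun F => ?_
      simp [hx]
    · rw [mI_X, mI_sup]
      congr 1
      ext F
      simp only [Finset.mem_insert]
      constructor
      · rintro ⟨y, hy, rfl | h⟩
        · exact Or.inr hy
        · exact Or.inl ⟨y, hy, h⟩
      · rintro (⟨y, hy, h⟩ | h)
        · exact ⟨y, hy, Or.inr h⟩
        · exact ⟨x, h, Or.inl rfl⟩
    · intro j hj
      refine ih (insert x W) ?_ j (by omega)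
      rw [Finset.card_compl] at hW ⊢
      rw [Finset.card_insert_of_notMem hx]
      omega

lemma ev_lower {P : Finset σ → Prop} (hP : Monotone P) (D : ℕ) (hD : ∀ F, P F → D ≤ F.card)
    (s : ℕ) : ∀ (C W : Finset σ), Disjoint C W → (C ∪ W)ᶜ.card = s → D ≤ Wᶜ.card + 1 →
    ∀ i, i + 1 < D → EV K (fun F => (∃ x ∈ F, x ∈ W) ∨ P (F ∪ C)) i := by
  induction s with
  | zero =>
    intro C W hd hs hW i hi
    have hCW : C ∪ W = Finset.univ := by
      rwa [Finset.card_eq_zero, Finset.compl_eq_empty_iff] at hs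
    by_cases hC : P C
    · have : mI K (fun F => (∃ x ∈ F, x ∈ W) ∨ P (F ∪ C)) = ⊤ := by
        rw [Ideal.eq_top_iff_one]
        refine Ideal.subset_span ⟨0, ?_, rfl⟩
        simpa using hC
      have : Subsingleton (MvPolynomial σ K ⧸ mI K (fun F => (∃ x ∈ F, x ∈ W) ∨ P (F ∪ C))) :=
        Ideal.Quotient.subsingleton_iff.2 this
      exact ext_of_subsingleton i
    · have := ev_vars K _ W rfl i (by omega)
      have e : (fun F => (∃ x ∈ F, x ∈ W) ∨ P (F ∪ C)) = (fun F => ∃ x ∈ F, x ∈ W) := by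
        ext F
        constructor
        · rintro (h | h)
          · exact h
          · by_contra hcon
            push Not at hcon
            refine hC (hP ?_ h)
            intro y hy
            rcases Finset.mem_union.1 hy with hy | hy
            · have : y ∈ C ∪ W := by rw [hCW]; simp
              exact (Finset.mem_union.1 this).resolve_right (hcon y hy)
            · exact hy
        · exact Or.inl
      rw [e]; exact this
  | succ s ih =>
    intro C W hd hs hW i hi
    by_cases hWs : P Wᶜ
    · obtain ⟨x, hx⟩ : ((C ∪ W)ᶜ).Nonempty := by rw [← Finset.card_pos]; omega
      simp only [Finset.mem_compl, Finset.mem_union, not_or] at hx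
      have hm : ∀ C W : Finset σ, Monotone (fun F : Finset σ => (∃ x ∈ F, x ∈ W) ∨ P (F ∪ C)) := by
        rintro C W a b hab (⟨x, h1, h2⟩ | h)
        · exact Or.inl ⟨x, hab h1, h2⟩
        · exact Or.inr (hP (Finset.union_subset_union hab le_rfl) h)
      have hc : ∀ T : Finset σ, T = insert x (C ∪ W) → (T)ᶜ.card = s := by
        rintro T rfl
        rw [Finset.card_compl] at hs ⊢
        rw [Finset.card_insert_of_notMem (by simp [hx])]
        omega
      refine ext_colon _ (mI K (fun F => (∃ y ∈ F, y ∈ W) ∨ P (F ∪ insert x C)))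
        (mI K (fun F => (∃ y ∈ F, y ∈ insert x W) ∨ P (F ∪ C))) (X x) i ?_ ?_ ?_ ?_
      · refine mI_colon K (hm _ _) (hm _ _) x fun F => ?_
        simp [hx.2]
      · rw [mI_X, mI_sup]
        congr 1
        ext F
        simp only [Finset.mem_insert]
        constructor
        · rintro (⟨y, hy, rfl | h⟩ | h)
          · exact Or.inr hy
          · exact Or.inl (Or.inl ⟨y, hy, h⟩)
          · exact Or.inl (Or.inr h)
        · rintro ((⟨y, hy, h⟩ | h) | h)
          · exact Or.inl ⟨y, hy, Or.inr h⟩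
          · exact Or.inr h
          · exact Or.inl ⟨x, h, Or.inl rfl⟩
      · refine ih _ _ ?_ ?_ hW i hi
        · rw [Finset.disjoint_insert_left]; exact ⟨hx.2, hd⟩
        · exact hc _ (by rw [Finset.insert_union])
      · refine ih _ _ ?_ ?_ ?_ i hi
        · rw [Finset.disjoint_insert_right]; exact ⟨hx.1, hd⟩
        · exact hc _ (by rw [Finset.union_insert])
        · have := hD _ hWs
          rw [Finset.card_compl] at this ⊢
          rw [Finset.card_insert_of_notMem hx.2]
          omega
    · have := ev_vars K _ W rfl i (by omega)
      have e : (fun F => (∃ x ∈ F, x ∈ W) ∨ P (F ∪ C)) = (fun F => ∃ x ∈ F, x ∈ W) := by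
        ext F
        constructor
        · rintro (h | h)
          · exact h
          · by_contra hcon
            push Not at hcon
            refine hWs (hP ?_ h)
            intro y hy
            rw [Finset.mem_compl]
            rcases Finset.mem_union.1 hy with hy | hy
            · exact hcon y hy
            · exact Finset.disjoint_left.1 hd hy
        · exact Or.inl
      rw [e]; exact this

lemma span_X_eq_mI : Ideal.span (Set.range (X : σ → MvPolynomial σ K)) =
    mI K (fun F : Finset σ => F.Nonempty) := by
  apply le_antisymm
  · rw [Ideal.span_le]
    rintro _ ⟨x, rfl⟩
    refine Ideal.subset_span ⟨Finsupp.single x 1, ?_, rfl⟩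
    simp
  · rw [mI, Ideal.span_le]
    rintro _ ⟨m, ⟨x, hx⟩, rfl⟩
    have : monomial m (1 : K) ∈ mI K (fun F => x ∈ F) := Ideal.subset_span ⟨m, hx, rfl⟩
    rw [← mI_X] at this
    exact Ideal.span_mono (by simp) this

lemma mI_ne_top {P : Finset σ → Prop} (hP : Monotone P) (h : ¬ P ∅) : mI K P ≠ ⊤ := by
  rw [Ne, Ideal.eq_top_iff_one, mem_mI K hP]
  intro h1
  exact h (by simpa using h1 0 (by simp))

lemma span_X_ne_top : Ideal.span (Set.range (X : σ → MvPolynomial σ K)) ≠ ⊤ := by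
  rw [span_X_eq_mI]
  exact mI_ne_top K (fun a b hab h => h.mono hab) (by simp)

lemma ev_upper (M : Matroid σ) (hE : M.E = Set.univ) (D : ℕ)
    (hr : ∀ B, M.IsBase B → B.ncard = D) (s : ℕ) : ∀ (T : Finset σ), M.Indep T →
    T.card + s + 1 = D →
    ¬ EV K (fun F => (∃ x ∈ F, x ∈ M.closure T) ∨ M.Spanning (F ∪ T : Set σ)) s := by
  classical
  have hsp : ∀ F : Finset σ, M.Spanning F → D ≤ F.card := by
    intro F hF
    obtain ⟨B, hB, hBF⟩ := hF.exists_isBase_subset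
    rw [← hr B hB, ← Set.ncard_coe_finset]
    exact Set.ncard_le_ncard hBF (Set.toFinite _)
  have hspm : Monotone (fun F : Set σ => M.Spanning F) := fun a b hab h =>
    h.superset hab (by rw [hE]; exact Set.subset_univ _)
  have hcl : ∀ T : Finset σ, D ≤ (M.closure T).toFinsetᶜ.card + T.card := by
    intro T
    refine (hsp (T ∪ (M.closure T).toFinsetᶜ) ?_).trans ?_
    · rw [Matroid.spanning_iff_ground_subset_closure (by rw [hE]; exact Set.subset_univ _), hE]
      intro x _
      by_cases hx : x ∈ M.closure T
      · exact M.closure_subset_closure (by simp) hx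
      · refine M.mem_closure_of_mem' (by simp [hx]) (by rw [hE]; trivial)
    · rw [add_comm]; exact Finset.card_union_le _ _
  induction s with
  | zero =>
    intro T hT hc h
    have e : mI K (fun F => (∃ x ∈ F, x ∈ M.closure T) ∨ M.Spanning (F ∪ T : Set σ)) =
        Ideal.span (Set.range (X : σ → MvPolynomial σ K)) := by
      rw [span_X_eq_mI]
      congr 1
      ext F
      constructor
      · rintro (⟨x, hx, _⟩ | hF)
        · exact ⟨x, hx⟩
        · rw [Finset.nonempty_iff_ne_empty]
          rintro rfl
          have := hsp T (by simpa using hF)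
          omega
      · rintro ⟨x, hx⟩
        by_cases hxc : x ∈ M.closure T
        · exact Or.inl ⟨x, hx, hxc⟩
        · right
          have hxE : x ∈ M.E := by rw [hE]; trivial
          have hxT : x ∉ T := fun h => hxc (M.mem_closure_of_mem' h hxE)
          have hT' : M.Indep (insert x T : Finset σ) := by
            rw [Finset.coe_insert]
            exact (hT.notMem_closure_iff_of_notMem (by simpa using hxT)).1 hxc
          obtain ⟨B, hB, hTB⟩ := hT'.exists_isBase_superset
          have : ((insert x T : Finset σ) : Set σ) = B := by
            refine Set.eq_of_subset_of_ncard_le hTB ?_ (Set.toFinite _)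
            rw [hr B hB, Set.ncard_coe_finset, Finset.card_insert_of_notMem hxT]
            omega
          refine hspm ?_ hB.spanning
          rw [← this]
          intro y hy
          simp only [Finset.coe_insert, Set.mem_insert_iff, Finset.mem_coe] at hy
          rcases hy with rfl | hy
          · exact Or.inl hx
          · exact Or.inr hy
    rw [EV, e] at h
    have h2 : Subsingleton (resK K (σ := σ) →ₗ[MvPolynomial σ K] resK K (σ := σ)) :=
      (Ext.addEquiv₀.trans ModuleCat.homAddEquiv).symm.subsingleton
    have h3 : Nontrivial (MvPolynomial σ K ⧸ Ideal.span (Set.range (X : σ → MvPolynomial σ K))) :=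
      Ideal.Quotient.nontrivial_iff.2 (span_X_ne_top K)
    obtain ⟨a, ha⟩ := exists_ne
      (0 : MvPolynomial σ K ⧸ Ideal.span (Set.range (X : σ → MvPolynomial σ K)))
    exact ha (LinearMap.congr_fun (@Subsingleton.elim _ h2 LinearMap.id 0) a)
  | succ s ih =>
    intro T hT hc h
    obtain ⟨b, hb⟩ : ∃ b, b ∉ M.closure T := by
      by_contra hcon
      push Not at hcon
      have : M.Spanning T := by
        rw [Matroid.spanning_iff_ground_subset_closure (by rw [hE]; exact Set.subset_univ _)]
        exact fun x _ => hcon x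
      have := hsp T this
      omega
    have hbE : b ∈ M.E := by rw [hE]; trivial
    have hbT : b ∉ T := fun h => hb (M.mem_closure_of_mem' h hbE)
    have hT' : M.Indep (insert b T : Finset σ) := by
      rw [Finset.coe_insert]
      exact (hT.notMem_closure_iff_of_notMem (by simpa using hbT)).1 hb
    refine ih (insert b T) hT' (by rw [Finset.card_insert_of_notMem hbT]; omega) ?_
    have hPm : Monotone (fun F : Finset σ => M.Spanning (F ∪ T : Set σ)) := fun a b hab h =>
      hspm (Set.union_subset_union_left _ (by simpa using hab)) h
    have hPc : ∀ F : Finset σ, M.Spanning (F ∪ T : Set σ) → D - T.card ≤ F.card := by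
      intro F hF
      rw [← Finset.coe_union] at hF
      have := (hsp _ hF).trans (Finset.card_union_le _ _)
      omega
    have hun : ∀ F : Finset σ, (((F ∪ {b} : Finset σ) : Set σ) ∪ T) =
        (F : Set σ) ∪ ((insert b T : Finset σ) : Set σ) := by
      intro F
      ext y
      simp only [Finset.coe_union, Finset.coe_singleton, Finset.coe_insert, Set.mem_union,
        Set.mem_insert_iff, Set.mem_singleton_iff]
      tauto
    have hm : ∀ C W : Finset σ, Monotone (fun F : Finset σ => (∃ x ∈ F, x ∈ W) ∨
        M.Spanning ((F ∪ C : Finset σ) ∪ T : Set σ)) := by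
      rintro C W a b hab (⟨x, h1, h2⟩ | h)
      · exact Or.inl ⟨x, hab h1, h2⟩
      · exact Or.inr (hPm (Finset.union_subset_union hab le_rfl) h)
    have key := ext_mv (N := resK K (σ := σ))
      (mI K (fun F => (∃ x ∈ F, x ∈ (M.closure T).toFinset) ∨ M.Spanning ((F ∪ {b} : Finset σ) ∪ T : Set σ)))
      (mI K (fun F => (∃ x ∈ F, x ∈ (M.closure (insert b T : Finset σ)).toFinset) ∨
        M.Spanning ((F ∪ ∅ : Finset σ) ∪ T : Set σ))) s ?_ ?_ ?_
    · rw [mI_sup] at key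
      refine EV_congr K (fun F => ?_) key
      simp only [hun]
      simp only [Set.mem_toFinset, Finset.union_empty]
      constructor
      · rintro ((⟨x, hx, hxc⟩ | h) | (h | h))
        · exact Or.inl ⟨x, hx, M.closure_subset_closure (by simp) hxc⟩
        · exact Or.inr h
        · exact Or.inl h
        · exact Or.inr (hspm (Set.union_subset_union_right _ (by simp)) h)
      · rintro (h | h)
        · exact Or.inr (Or.inl h)
        · exact Or.inl (Or.inr h)
    · refine ev_lower K hPm (D - T.card) hPc _ _ _ ?_ rfl ?_ s (by omega)
      · simpa using hb
      · have := hcl T; omega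
    · refine ev_lower K hPm (D - T.card) hPc _ _ _ ?_ rfl ?_ s (by omega)
      · simp
      · have := hcl (insert b T)
        rw [Finset.card_insert_of_notMem hbT] at this
        omega
    · rw [mI_inf K (hm _ _) (hm _ _)]
      refine EV_congr K (fun F => ?_) h
      simp only [hun]
      simp only [Set.mem_toFinset, Finset.union_empty]
      constructor
      · rintro (⟨x, hx, hxc⟩ | h)
        · exact ⟨Or.inl ⟨x, hx, hxc⟩, Or.inl ⟨x, hx, M.closure_subset_closure (by simp) hxc⟩⟩
        · exact ⟨Or.inr (hspm (Set.union_subset_union_right _ (by simp)) h), Or.inr h⟩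
      · rintro ⟨h1 | h1, h2 | h2⟩
        · exact Or.inl h1
        · exact Or.inl h1
        · obtain ⟨x, hx, hxc⟩ := h2
          by_cases hxT : x ∈ M.closure T
          · exact Or.inl ⟨x, hx, hxT⟩
          · right
            rw [Finset.coe_insert] at hxc h1
            have hbx : b ∈ M.closure (insert x T) := (M.closure_exchange ⟨hxc, hxT⟩).1
            have hsub : M.closure (F ∪ insert b T : Set σ) ⊆ M.closure (F ∪ T : Set σ) := by
              apply M.closure_subset_closure_of_subset_closure
              have hU : ∀ S : Set σ, S ⊆ M.closure S := fun S =>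
                M.subset_closure S (by rw [hE]; exact Set.subset_univ _)
              rintro y (hy | rfl | hy)
              · exact hU _ (Or.inl hy)
              · refine M.closure_subset_closure ?_ hbx
                rintro z (rfl | hz)
                · exact Or.inl hx
                · exact Or.inr hz
              · exact hU _ (Or.inr hy)
            rw [Matroid.spanning_iff_ground_subset_closure (by rw [hE]; exact Set.subset_univ _)]
              at h1 ⊢
            exact h1.trans hsub
        · exact Or.inr h2

lemma qdepth_matroid (M : Matroid σ) (hE : M.E = Set.univ) (hl : M.closure ∅ = ∅) (D : ℕ)
    (hD : 1 ≤ D) (hr : ∀ B, M.IsBase B → B.ncard = D) :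
    qdepth K (mI K (fun F : Finset σ => M.Spanning (F : Set σ))) = D - 1 := by
  have hsp : ∀ F : Finset σ, M.Spanning F → D ≤ F.card := by
    intro F hF
    obtain ⟨B, hB, hBF⟩ := hF.exists_isBase_subset
    rw [← hr B hB, ← Set.ncard_coe_finset]
    exact Set.ncard_le_ncard hBF (Set.toFinite _)
  have hspm : Monotone (fun F : Finset σ => M.Spanning (F : Set σ)) := fun a b hab h =>
    h.superset (by simpa using hab) (by rw [hE]; exact Set.subset_univ _)
  have hlow : ∀ i < D - 1, EV K (fun F : Finset σ => M.Spanning (F : Set σ)) i := by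
    intro i hi
    have := ev_lower K hspm D hsp _ ∅ ∅ (by simp) rfl (by
      have := hsp Finset.univ (by rw [Finset.coe_univ, ← hE]; exact M.ground_spanning)
      simp at this ⊢
      omega) i (by omega)
    exact EV_congr K (fun F => by simp) this
  have hup : ¬ EV K (fun F : Finset σ => M.Spanning (F : Set σ)) (D - 1) := by
    intro h
    refine ev_upper K M hE D hr (D - 1) ∅ (by simp) (by simp; omega) ?_
    exact EV_congr K (fun F => by simp [hl]) h
  set J := mI K (fun F : Finset σ => M.Spanning (F : Set σ)) with hJ
  set m := Ideal.span (Set.range (X : σ → MvPolynomial σ K)) with hm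
  have hJm : J ≤ m := by
    rw [hm, span_X_eq_mI]
    refine Ideal.span_mono (Set.image_mono ?_)
    intro F hF
    have := hsp _ hF
    exact Finset.card_pos.1 (by omega)
  have hlt : m • (⊤ : Submodule (MvPolynomial σ K) (MvPolynomial σ K ⧸ J)) < ⊤ := by
    rw [lt_top_iff_ne_top]
    intro htop
    refine span_X_ne_top K (σ := σ) ?_
    have h1 : (Submodule.Quotient.mk 1 : MvPolynomial σ K ⧸ J) ∈
        m • (⊤ : Submodule (MvPolynomial σ K) (MvPolynomial σ K ⧸ J)) := by rw [htop]; trivial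
    have h2 : m • (⊤ : Submodule (MvPolynomial σ K) (MvPolynomial σ K ⧸ J)) ≤
        LinearMap.ker (Submodule.factor hJm) := by
      rw [Submodule.smul_le]
      intro r hr y _
      obtain ⟨a, rfl⟩ := Submodule.Quotient.mk_surjective _ y
      exact (Submodule.Quotient.mk_eq_zero (x := r * a) m).2 (Ideal.mul_mem_right _ _ hr)
    rw [← hm, Ideal.eq_top_iff_one]
    exact (Submodule.Quotient.mk_eq_zero (x := 1) m).1 (h2 h1)
  have hsupp : Module.support (MvPolynomial σ K) (resK K (σ := σ)) = PrimeSpectrum.zeroLocus m := by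
    rw [Module.support_eq_zeroLocus]
    congr 2
    exact Ideal.annihilator_quotient
  have hfin : Module.Finite (MvPolynomial σ K) (ModuleCat.of (MvPolynomial σ K) (MvPolynomial σ K ⧸ J)) :=
    inferInstanceAs (Module.Finite (MvPolynomial σ K) (MvPolynomial σ K ⧸ J))
  have hfin2 : Module.Finite (MvPolynomial σ K) (resK K (σ := σ)) :=
    inferInstanceAs (Module.Finite (MvPolynomial σ K) (MvPolynomial σ K ⧸ m))
  refine IsGreatest.csSup_eq ⟨?_, ?_⟩
  · exact ModuleCat.exists_isRegular_of_exists_subsingleton_ext m (D - 1)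
      (ModuleCat.of _ (MvPolynomial σ K ⧸ J)) hlt (resK K) hsupp hlow
  · rintro r ⟨l, rfl, hl1, hl2⟩
    by_contra hcon
    refine hup (ModuleCat.subsingleton_ext_of_exists_isRegular m (resK K) hsupp.subset
      (ModuleCat.of _ (MvPolynomial σ K ⧸ J)) hlt l hl1 hl2 (D - 1) (by omega))

end MonPart

section CombPart

universe v

variable (K : Type v) [Field K] {σ : Type} [Fintype σ] [DecidableEq σ]

noncomputable def sqv (B : Finset σ) : σ →₀ ℕ :=
  Finsupp.equivFunOnFinite.symm (fun i => if i ∈ B then 1 else 0)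

lemma sqv_apply (B : Finset σ) (i : σ) : sqv B i = if i ∈ B then 1 else 0 := rfl

lemma sqv_support (B : Finset σ) : (sqv B).support = B := by
  ext i; simp [sqv_apply]

lemma sqv_le_iff (B : Finset σ) (m : σ →₀ ℕ) : sqv B ≤ m ↔ B ⊆ m.support := by
  constructor
  · intro h i hi
    have := h i
    rw [sqv_apply, if_pos hi] at this
    simp; omega
  · intro h i
    rw [sqv_apply]
    split_ifs with hi
    · have := h hi
      simp at this; omega
    · exact Nat.zero_le _

lemma sqv_inj {B C : Finset σ} (h : sqv B = sqv C) : B = C := by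
  rw [← sqv_support B, h, sqv_support]

lemma eq_sqv_of_le_one (m : σ →₀ ℕ) (h : ∀ i, m i ≤ 1) : m = sqv m.support := by
  ext i
  rw [sqv_apply]
  have := h i
  by_cases hi : m i = 0
  · simp [hi]
  · have : i ∈ m.support := by simpa using hi
    rw [if_pos this]; omega

lemma monomial_sqv (B : Finset σ) : monomial (sqv B) (1 : K) = ∏ i ∈ B, X i := by
  rw [monomial_eq, Finsupp.prod, sqv_support]
  simp only [C_1, one_mul]
  refine Finset.prod_congr rfl fun i hi => ?_
  rw [sqv_apply, if_pos hi, pow_one]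

lemma squarefree_sqv (B : Finset σ) : Squarefree (monomial (sqv B) (1 : K)) := by
  rw [monomial_sqv]
  apply Finset.squarefree_prod_of_pairwise_isCoprime
  · intro i _ j _ hij
    rw [Function.onFun, (X_prime (R := K) (i := i)).irreducible.isRelPrime_iff_not_dvd]
    rw [X_dvd_X]
    simpa using hij
  · intro i _
    exact (X_prime (R := K) (i := i)).irreducible.squarefree

lemma le_one_of_squarefree (m : σ →₀ ℕ) (h : Squarefree (monomial m (1 : K))) (i : σ) :
    m i ≤ 1 := by
  by_contra hc
  have h1 : (X i * X i : MvPolynomial σ K) ∣ monomial m 1 := by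
    rw [X, monomial_mul, monomial_dvd_monomial]
    refine ⟨Or.inr ?_, by simp⟩
    intro j
    by_cases hj : i = j
    · subst hj; simp; omega
    · simp [hj]
  exact (X_prime (R := K) (i := i)).not_unit (h _ h1)

lemma sqv_degree (B : Finset σ) : (monomial (sqv B) (1 : K)).totalDegree = B.card := by
  rw [totalDegree_monomial _ one_ne_zero, Finsupp.sum, sqv_support, Finset.card_eq_sum_ones]
  refine Finset.sum_congr rfl fun i hi => ?_
  rw [sqv_apply, if_pos hi]

lemma mono_inj {a b : σ →₀ ℕ} (h : monomial a (1 : K) = monomial b 1) : a = b := by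
  simpa [monomial_left_inj] using h

lemma mono_dvd {a b : σ →₀ ℕ} : monomial a (1 : K) ∣ monomial b 1 ↔ a ≤ b := by
  rw [monomial_dvd_monomial]; simp

/-- the support sets of the minimal generators -/
def BaseF (I : Ideal (MvPolynomial σ K)) (B : Finset σ) : Prop :=
  monomial (sqv B) (1 : K) ∈ minGens K I

variable {K}

lemma exists_baseF {I : Ideal (MvPolynomial σ K)} (hsq : ∀ u ∈ minGens K I, Squarefree u)
    {u : MvPolynomial σ K} (hu : u ∈ minGens K I) :
    ∃ B, BaseF K I B ∧ u = monomial (sqv B) 1 := by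
  obtain ⟨m, rfl⟩ := hu.1
  have := eq_sqv_of_le_one m (le_one_of_squarefree K m (hsq _ hu))
  refine ⟨m.support, ?_, ?_⟩
  · rw [BaseF, ← this]; exact hu
  · rw [← this]

lemma exists_minGen_le {I : Ideal (MvPolynomial σ K)} (N : ℕ) : ∀ (m : σ →₀ ℕ),
    m.degree = N → monomial m (1 : K) ∈ I →
    ∃ a, a ≤ m ∧ monomial a (1 : K) ∈ minGens K I := by
  induction N using Nat.strong_induction_on with
  | _ N ih =>
    intro m hm hmI
    by_cases h : monomial m (1 : K) ∈ minGens K I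
    · exact ⟨m, le_rfl, h⟩
    · have : ∃ v, IsMonomial K v ∧ v ∈ I ∧ v ∣ monomial m 1 ∧ v ≠ monomial m 1 := by
        by_contra hc
        push Not at hc
        exact h ⟨⟨m, rfl⟩, hmI, hc⟩
      obtain ⟨_, ⟨b, rfl⟩, hbI, hb, hne⟩ := this
      rw [mono_dvd] at hb
      have hlt : b.degree < N := by
        obtain ⟨c, rfl⟩ := exists_add_of_le hb
        rw [map_add] at hm
        have : c ≠ 0 := by rintro rfl; simp at hne
        have := (Finsupp.degree_eq_zero_iff c).not.mpr this
        omega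
      obtain ⟨a, ha, ha'⟩ := ih _ hlt b rfl hbI
      exact ⟨a, ha.trans hb, ha'⟩

lemma exists_baseF_subset {I : Ideal (MvPolynomial σ K)} (hsq : ∀ u ∈ minGens K I, Squarefree u)
    {m : σ →₀ ℕ} (hm : monomial m (1 : K) ∈ I) : ∃ B, BaseF K I B ∧ B ⊆ m.support := by
  obtain ⟨a, ha, ha'⟩ := exists_minGen_le _ m rfl hm
  obtain ⟨B, hB, h⟩ := exists_baseF hsq ha'
  refine ⟨B, hB, ?_⟩
  rw [← sqv_le_iff, ← mono_inj K h]; exact ha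

lemma baseF_exchange {I : Ideal (MvPolynomial σ K)} (hmat : IsMatroidal K I)
    {A B : Finset σ} (hA : BaseF K I A) (hB : BaseF K I B) {x : σ} (hx : x ∈ A) (hxB : x ∉ B) :
    ∃ y ∈ B, y ∉ A ∧ BaseF K I (insert y (A.erase x)) := by
  obtain ⟨y, hy, w, hw, hyw⟩ := hmat.1.2.2 _ hA _ hB x (by
    rw [degreeOf_monomial_eq _ _ one_ne_zero, degreeOf_monomial_eq _ _ one_ne_zero,
      sqv_apply, sqv_apply, if_pos hx, if_neg hxB]
    exact one_pos)
  rw [degreeOf_monomial_eq _ _ one_ne_zero, degreeOf_monomial_eq _ _ one_ne_zero,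
      sqv_apply, sqv_apply] at hy
  have hyA : y ∉ A := by intro h; rw [if_pos h] at hy; split_ifs at hy <;> omega
  have hyB : y ∈ B := by by_contra h; rw [if_neg h] at hy; omega
  refine ⟨y, hyB, hyA, ?_⟩
  rw [monomial_sqv, ← Finset.mul_prod_erase _ _ hx] at hw
  have := mul_left_cancel₀ (X_ne_zero x) hw
  rw [BaseF, monomial_sqv, Finset.prod_insert (by simp [hyA]), this]
  exact hyw

lemma union_aug (M : Matroid σ) (k : ℕ) (Y : Set σ) (c' : σ → Fin k)
    (hc' : ∀ i, M.Indep {x | x ∈ Y ∧ c' x = i}) (X : Set σ) (hXY : X.ncard < Y.ncard) (N : ℕ) :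
    ∀ c : σ → Fin k, (Finset.univ.filter fun x => c x ≠ c' x).card = N →
    (∀ i, M.Indep {x | x ∈ X ∧ c x = i}) →
    ∃ e ∈ Y, e ∉ X ∧ ∃ c : σ → Fin k, ∀ i, M.Indep {x | x ∈ insert e X ∧ c x = i} := by
  classical
  induction N using Nat.strong_induction_on with
  | _ N ih =>
    intro c hN hc
    have hsum : ∀ (Z : Set σ) (f : σ → Fin k), Z.ncard = ∑ i, {x | x ∈ Z ∧ f x = i}.ncard := by
      intro Z f
      have h1 := Finset.card_eq_sum_card_fiberwise (f := f) (s := Z.toFinset) (t := Finset.univ)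
        (by simp)
      rw [Set.ncard_eq_toFinset_card', h1]
      refine Finset.sum_congr rfl fun i _ => ?_
      rw [Set.ncard_eq_toFinset_card']
      congr 1
      ext x; simp
    obtain ⟨i, hi⟩ : ∃ i, {x | x ∈ X ∧ c x = i}.ncard < {x | x ∈ Y ∧ c' x = i}.ncard := by
      by_contra h
      push Not at h
      have := Finset.sum_le_sum (s := Finset.univ) fun i _ => h i
      rw [← hsum, ← hsum] at this
      omega
    obtain ⟨y, hy, hyI⟩ := (hc i).augment (hc' i) (by
      rw [← (Set.toFinite _).cast_ncard_eq, ← (Set.toFinite {x | x ∈ Y ∧ c' x = i}).cast_ncard_eq]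
      exact_mod_cast hi)
    obtain ⟨⟨hyY, hyc⟩, hyX⟩ := hy
    have key : ∀ j, M.Indep {x | x ∈ insert y X ∧ Function.update c y i x = j} := by
      intro j
      by_cases hj : i = j
      · subst hj
        refine hyI.subset ?_
        rintro x ⟨hx, hxc⟩
        by_cases hxy : x = y
        · left; exact hxy
        · right
          rw [Function.update_of_ne hxy] at hxc
          exact ⟨hx.resolve_left hxy, hxc⟩
      · refine (hc j).subset ?_
        rintro x ⟨hx, hxc⟩
        by_cases hxy : x = y
        · subst hxy; simp at hxc; exact absurd hxc hj
        · rw [Function.update_of_ne hxy] at hxc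
          exact ⟨hx.resolve_left hxy, hxc⟩
    by_cases hyX' : y ∈ X
    · refine ih _ ?_ (Function.update c y i) rfl ?_
      · rw [← hN]
        apply Finset.card_lt_card
        rw [Finset.ssubset_iff_of_subset]
        · refine ⟨y, ?_, ?_⟩
          · simp only [Finset.mem_filter, Finset.mem_univ, true_and, hyc]
            intro h; exact hyX ⟨hyX', h⟩
          · simp [hyc]
        · intro x hx
          by_cases hxy : x = y
          · subst hxy; simp [hyc] at hx
          · simpa [Function.update_of_ne hxy] using hx
      · intro j
        have := key j
        rwa [Set.insert_eq_of_mem hyX'] at this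
    · exact ⟨y, hyY, hyX', _, key⟩

lemma exists_union (M : Matroid σ) (k : ℕ) (hk : 1 ≤ k) : ∃ N : Matroid σ, N.E = Set.univ ∧
    ∀ X, N.Indep X ↔ ∃ c : σ → Fin k, ∀ i, M.Indep {x | x ∈ X ∧ c x = i} := by
  refine ⟨(IndepMatroid.ofFinite (E := Set.univ) Set.finite_univ
    (fun X => ∃ c : σ → Fin k, ∀ i, M.Indep {x | x ∈ X ∧ c x = i}) ?_ ?_ ?_ ?_).matroid,
    rfl, fun X => Iff.rfl⟩
  · exact ⟨fun _ => ⟨0, hk⟩, fun i => by simp⟩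
  · rintro I J ⟨c, hc⟩ hIJ
    exact ⟨c, fun i => (hc i).subset fun x hx => ⟨hIJ hx.1, hx.2⟩⟩
  · rintro I J ⟨c, hc⟩ ⟨c', hc'⟩ hlt
    exact union_aug M k J c' hc' I hlt _ c rfl hc
  · intro I _; exact Set.subset_univ _

lemma exists_baseMatroid {I : Ideal (MvPolynomial σ K)} (hmat : IsMatroidal K I)
    (hne : (minGens K I).Nonempty) : ∃ M : Matroid σ, M.E = Set.univ ∧
    ∀ F : Finset σ, M.IsBase (F : Set σ) ↔ BaseF K I F := by
  refine ⟨Matroid.ofIsBaseOfFinite (E := Set.univ) Set.finite_univ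
    (fun B => ∃ F : Finset σ, (F : Set σ) = B ∧ BaseF K I F) ?_ ?_ ?_, rfl, ?_⟩
  · obtain ⟨u, hu⟩ := hne
    obtain ⟨B, hB, -⟩ := exists_baseF hmat.2 hu
    exact ⟨_, B, rfl, hB⟩
  · rintro _ _ ⟨A, rfl, hA⟩ ⟨B, rfl, hB⟩ x ⟨hx, hxB⟩
    obtain ⟨y, hy, hyA, h⟩ := baseF_exchange hmat hA hB (by simpa using hx) (by simpa using hxB)
    refine ⟨y, ⟨by simpa using hy, by simpa using hyA⟩, _, ?_, h⟩
    simp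
  · intro _ _; exact Set.subset_univ _
  · intro F
    constructor
    · rintro ⟨G, hG, h⟩
      rwa [← Finset.coe_injective hG]
    · intro h; exact ⟨F, rfl, h⟩

lemma mem_ofList_take (l : List (MvPolynomial σ K)) (a : Fin l.length → σ →₀ ℕ)
    (ha : ∀ i, l[i] = monomial (a i) 1) (j : ℕ) (m : σ →₀ ℕ) :
    monomial m (1 : K) ∈ Ideal.ofList (l.take j) ↔ ∃ t : Fin l.length, t.1 < j ∧ a t ≤ m := by
  have h : {r | r ∈ l.take j} = (fun s => monomial s (1 : K)) '' (a '' {t | t.1 < j}) := by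
    ext r
    simp only [Set.mem_setOf_eq, Set.mem_image, exists_exists_and_eq_and,
      List.mem_take_iff_getElem]
    constructor
    · rintro ⟨i, hi, rfl⟩
      have hi' := lt_min_iff.1 hi
      exact ⟨⟨i, hi'.2⟩, hi'.1, (ha ⟨i, hi'.2⟩).symm⟩
    · rintro ⟨t, ht, rfl⟩
      exact ⟨t.1, lt_min ht t.2, ha t⟩
  rw [Ideal.ofList, h, mem_ideal_span_monomial_image]
  classical
  simp [support_monomial]

lemma reg_disjoint (l : List (MvPolynomial σ K)) (a : Fin l.length → σ →₀ ℕ)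
    (ha : ∀ i, l[i] = monomial (a i) 1)
    (hl : RingTheory.Sequence.IsRegular (MvPolynomial σ K) l) :
    (∀ i, a i ≠ 0) ∧ ∀ j i, i < j → ∀ x, a i x = 0 ∨ a j x = 0 := by
  have h0 : ∀ i, a i ≠ 0 := by
    intro i hi
    apply hl.top_ne_smul
    rw [smul_eq_mul, Ideal.mul_top, eq_comm, Ideal.eq_top_iff_one]
    have := (mem_ofList_take l a ha l.length 0).2 ⟨i, i.2, hi.le⟩
    rw [List.take_length] at this
    exact this
  refine ⟨h0, ?_⟩
  intro j
  induction j using WellFoundedLT.induction with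
  | _ j ih =>
    intro i hij x
    by_contra hc
    push Not at hc
    have hreg := (RingTheory.Sequence.isWeaklyRegular_iff_Fin _ _).1 hl.toIsWeaklyRegular j
    rw [isSMulRegular_quotient_iff_mem_of_smul_mem, smul_eq_mul, Ideal.mul_top] at hreg
    have h1 : monomial (a i - Finsupp.single x 1) (1 : K) ∈ Ideal.ofList (l.take j) := by
      apply hreg
      rw [ha, smul_eq_mul, monomial_mul, mul_one, mem_ofList_take l a ha]
      refine ⟨i, hij, ?_⟩
      intro y
      by_cases hy : x = y
      · subst hy; simp; omega
      · simp [hy]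
    rw [mem_ofList_take l a ha] at h1
    obtain ⟨t, htj, ht⟩ := h1
    have htj : t < j := htj
    rcases lt_trichotomy t i with h | h | h
    · apply h0 t
      ext y
      have h2 := ih i hij t h y
      have h3 := ht y
      simp only [Finsupp.coe_tsub, Pi.sub_apply, Finsupp.coe_zero, Pi.zero_apply] at h3 ⊢
      omega
    · subst h
      have h3 := ht x
      simp at h3
      omega
    · apply h0 t
      ext y
      have h2 := ih t htj i h y
      have h3 := ht y
      simp only [Finsupp.coe_tsub, Pi.sub_apply, Finsupp.coe_zero, Pi.zero_apply] at h3 ⊢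
      omega

lemma exists_disjoint_bases {I : Ideal (MvPolynomial σ K)}
    (hsq : ∀ u ∈ minGens K I, Squarefree u) (k : ℕ) (hk : 1 ≤ k) (hnu : k ≤ monNu K I) :
    Nonempty σ ∧ ∃ b : Fin k → Finset σ, (∀ i, BaseF K I (b i)) ∧
      ∀ i j, i ≠ j → Disjoint (b i) (b j) := by
  set T := {m | ∃ l : List (MvPolynomial σ K), l.length = m ∧
    (∀ f ∈ l, IsMonomial K f ∧ f ∈ I) ∧
    RingTheory.Sequence.IsRegular (MvPolynomial σ K) l} with hT
  have hnu' : k ≤ sSup T := hnu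
  have hne : T.Nonempty := by
    by_contra h
    rw [Set.not_nonempty_iff_eq_empty] at h
    rw [h] at hnu'
    simp at hnu'
    omega
  have hb : BddAbove T := by
    by_contra h
    rw [Nat.sSup_of_not_bddAbove h] at hnu'
    omega
  obtain ⟨l, hlen, hmon, hreg⟩ := Nat.sSup_mem hne hb
  have : ∀ i : Fin l.length, ∃ m : σ →₀ ℕ, l[i] = monomial m (1 : K) := fun i =>
    (hmon _ (List.getElem_mem i.2)).1
  choose a ha using this
  obtain ⟨h0, hd⟩ := reg_disjoint l a ha hreg
  have hmem : ∀ i, ∃ B, BaseF K I B ∧ B ⊆ (a i).support := fun i =>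
    exists_baseF_subset hsq (by rw [← ha]; exact (hmon _ (List.getElem_mem i.2)).2)
  choose b hb1 hb2 using hmem
  have hkl : k ≤ l.length := by rw [hlen]; exact hnu'
  constructor
  · obtain ⟨x, -⟩ := Finsupp.ne_iff.1 (h0 ⟨0, by omega⟩)
    exact ⟨x⟩
  · refine ⟨fun i => b (Fin.castLE hkl i), fun i => hb1 _, ?_⟩
    have key : ∀ i j, i < j → Disjoint (b i) (b j) := by
      intro i j hij
      rw [Finset.disjoint_left]
      intro x hx hx'
      have h1 := hb2 i hx
      have h2 := hb2 j hx'
      simp only [Finsupp.mem_support_iff] at h1 h2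
      have := hd j i hij x
      tauto
    intro i j hij
    rcases lt_or_gt_of_ne hij with h | h
    · exact key _ _ (by simpa using h)
    · exact (key _ _ (by simpa using h)).symm

lemma prod_sqv {ι : Type*} (s : Finset ι) (b : ι → Finset σ)
    (hd : ∀ i ∈ s, ∀ j ∈ s, i ≠ j → Disjoint (b i) (b j)) :
    ∏ i ∈ s, monomial (sqv (b i)) (1 : K) = monomial (sqv (s.biUnion b)) 1 := by
  simp only [monomial_sqv]
  rw [Finset.prod_biUnion]
  intro i hi j hj hij
  exact hd i hi j hj hij

lemma list_minGens {I : Ideal (MvPolynomial σ K)} (hsq : ∀ u ∈ minGens K I, Squarefree u)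
    (k : ℕ) (l : List (MvPolynomial σ K)) (hl : l.length = k) (hm : ∀ f ∈ l, f ∈ minGens K I)
    (hs : Squarefree l.prod) : ∃ b : Fin k → Finset σ, (∀ i, BaseF K I (b i)) ∧
      (∀ i j, i ≠ j → Disjoint (b i) (b j)) ∧
      l.prod = monomial (sqv (Finset.univ.biUnion b)) 1 := by
  subst hl
  have : ∀ i : Fin l.length, ∃ B, BaseF K I B ∧ l[i] = monomial (sqv B) 1 := fun i =>
    exists_baseF hsq (hm _ (List.getElem_mem i.2))
  choose b hb hb' using this
  have hprod : l.prod = ∏ i : Fin l.length, monomial (sqv (b i)) (1 : K) := by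
    conv_lhs => rw [← List.ofFn_getElem (xs := l)]
    rw [List.prod_ofFn]
    exact Finset.prod_congr rfl fun i _ => hb' i
  have hdis : ∀ i j, i ≠ j → Disjoint (b i) (b j) := by
    intro i j hij
    rw [Finset.disjoint_left]
    intro x hi hj
    rw [hprod, ← Finset.mul_prod_erase _ _ (Finset.mem_univ i),
      ← Finset.mul_prod_erase _ _ (show j ∈ Finset.univ.erase i by simp [hij.symm]),
      ← mul_assoc] at hs
    have := hs.of_mul_left
    rw [monomial_mul, mul_one] at this
    have := le_one_of_squarefree K _ this x
    rw [Finsupp.add_apply, sqv_apply, sqv_apply, if_pos hi, if_pos hj] at this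
    omega
  refine ⟨b, hb, hdis, ?_⟩
  rw [hprod, prod_sqv]
  intro i _ j _ h
  exact hdis i j h

lemma ncard_fibres {k : ℕ} (Z : Set σ) (f : σ → Fin k) :
    Z.ncard = ∑ i, {x | x ∈ Z ∧ f x = i}.ncard := by
  classical
  have h1 := Finset.card_eq_sum_card_fiberwise (f := f) (s := Z.toFinset) (t := Finset.univ)
    (by simp)
  rw [Set.ncard_eq_toFinset_card', h1]
  refine Finset.sum_congr rfl fun i _ => ?_
  rw [Set.ncard_eq_toFinset_card']
  congr 1
  ext x; simp

lemma base_of_ncard (M : Matroid σ) (r : ℕ) (h : ∀ X, M.Indep X → X.ncard ≤ r) {X : Set σ}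
    (hX : M.Indep X) (hr : X.ncard = r) : M.IsBase X := by
  obtain ⟨B, hB, hXB⟩ := hX.exists_isBase_superset
  have := Set.eq_of_subset_of_ncard_le hXB (by rw [hr]; exact h _ hB.indep) (Set.toFinite _)
  rwa [this]

lemma indep_ncard_le (M : Matroid σ) (d : ℕ) (hd : ∀ F : Finset σ, M.IsBase (F : Set σ) → F.card = d)
    (X : Set σ) (hX : M.Indep X) : X.ncard ≤ d := by
  classical
  obtain ⟨B, hB, hXB⟩ := hX.exists_isBase_superset
  have h1 := hd B.toFinset (by simpa using hB)
  rw [← h1, ← Set.ncard_eq_toFinset_card']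
  exact Set.ncard_le_ncard hXB (Set.toFinite _)

lemma main_aux (I : Ideal (MvPolynomial σ K)) (d : ℕ)
    (hmat : IsMatroidal K I)
    (hne : (minGens K I).Nonempty)
    (hdeg : ∀ u ∈ minGens K I, totalDegree u = d)
    (hsupp : ∀ i : σ, ∃ u ∈ minGens K I, X i ∣ u) (k : ℕ) (hk : 1 ≤ k) (hnu : k ≤ monNu K I) :
    qdepth K (sqPow K I k) = k * d - 1 := by
  classical
  obtain ⟨M, hME, hMB⟩ := exists_baseMatroid hmat hne
  obtain ⟨N, hNE, hN⟩ := exists_union M k hk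
  obtain ⟨⟨x0⟩, b0, hb0, hd0⟩ := exists_disjoint_bases hmat.2 k hk hnu
  have hcard : ∀ F, BaseF K I F → F.card = d := fun F hF => by
    rw [← sqv_degree K F]; exact hdeg _ hF
  have hMd := indep_ncard_le M d (fun F hF => hcard F ((hMB F).1 hF))
  have hx : ∀ x, ∃ F, BaseF K I F ∧ x ∈ F := by
    intro x
    obtain ⟨u, hu, hxu⟩ := hsupp x
    obtain ⟨B, hB, rfl⟩ := exists_baseF hmat.2 hu
    refine ⟨B, hB, ?_⟩
    rw [X, mono_dvd] at hxu
    have := hxu x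
    rw [sqv_apply] at this
    by_contra h
    simp [h] at this
  have hd1 : 1 ≤ d := by
    obtain ⟨F, hF, hxF⟩ := hx x0
    rw [← hcard F hF]
    exact Finset.card_pos.2 ⟨_, hxF⟩
  have hNd : ∀ X, N.Indep X → X.ncard ≤ k * d := by
    intro X hX
    obtain ⟨c, hc⟩ := (hN X).1 hX
    rw [ncard_fibres X c]
    refine (Finset.sum_le_sum fun i _ => hMd _ (hc i)).trans ?_
    simp
  have hbU : ∀ b : Fin k → Finset σ, (∀ i, BaseF K I (b i)) →
      (∀ i j, i ≠ j → Disjoint (b i) (b j)) →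
      (Finset.univ.biUnion b).card = k * d ∧ N.IsBase (Finset.univ.biUnion b : Finset σ) := by
    intro b hb hdis
    have h1 : (Finset.univ.biUnion b).card = k * d := by
      rw [Finset.card_biUnion (fun i _ j _ h => hdis i j h),
        Finset.sum_congr rfl fun i _ => hcard _ (hb i)]
      simp
    refine ⟨h1, base_of_ncard N (k * d) hNd ?_ (by rw [Set.ncard_coe_finset, h1])⟩
    rw [hN]
    refine ⟨fun x => if h : ∃ i, x ∈ b i then h.choose else ⟨0, hk⟩, fun i => ?_⟩
    refine ((hMB _).2 (hb i)).indep.subset ?_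
    rintro x ⟨hxU, hxc⟩
    have h : ∃ i, x ∈ b i := by simpa using hxU
    simp only [dif_pos h] at hxc
    rw [← hxc]
    exact h.choose_spec
  have hNB : ∀ B, N.IsBase B → B.ncard = k * d := by
    intro B hB
    obtain ⟨h1, h2⟩ := hbU b0 hb0 hd0
    rw [hB.ncard_eq_ncard_of_isBase h2, Set.ncard_coe_finset, h1]
  have hsplit : ∀ B : Set σ, N.IsBase B → ∃ b : Fin k → Finset σ, (∀ i, BaseF K I (b i)) ∧
      (∀ i j, i ≠ j → Disjoint (b i) (b j)) ∧ (Finset.univ.biUnion b : Finset σ) = B := by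
    intro B hB
    obtain ⟨c, hc⟩ := (hN B).1 hB.indep
    refine ⟨fun i => {x | x ∈ B ∧ c x = i}.toFinset, ?_, ?_, ?_⟩
    · intro i
      rw [← hMB, Set.coe_toFinset]
      refine base_of_ncard M d hMd (hc i) ?_
      have h1 := hNB B hB
      rw [ncard_fibres B c] at h1
      have h2 : ∑ i : Fin k, {x | x ∈ B ∧ c x = i}.ncard = ∑ i : Fin k, d := by
        rw [h1]; simp
      exact (Finset.sum_eq_sum_iff_of_le fun i _ => hMd _ (hc i)).1 h2 i (Finset.mem_univ _)
    · intro i j hij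
      rw [Finset.disjoint_left]
      intro x hx hx'
      simp at hx hx'
      exact hij (hx.2.symm.trans hx'.2)
    · ext x; simp
  have hloop : N.closure ∅ = ∅ := by
    rw [Set.eq_empty_iff_forall_notMem]
    intro x hxl
    obtain ⟨F, hF, hxF⟩ := hx x
    have hind : N.Indep {x} := by
      rw [hN]
      refine ⟨fun _ => ⟨0, hk⟩, fun i => ((hMB F).2 hF).indep.subset ?_⟩
      rintro y ⟨hy, -⟩
      rw [Set.mem_singleton_iff] at hy
      subst hy
      simpa using hxF
    have hloop : N.IsLoop x := hxl
    exact hloop.not_indep_of_mem (Set.mem_singleton x) hind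
  have hpow : sqPow K I k = mI K (fun F : Finset σ => N.Spanning (F : Set σ)) := by
    apply le_antisymm
    · rw [sqPow, Ideal.span_le]
      rintro u ⟨hu, l, hl, hm, rfl⟩
      obtain ⟨b, hb, hdis, hprod⟩ := list_minGens hmat.2 k l hl hm hu
      rw [hprod]
      refine Ideal.subset_span ⟨_, ?_, rfl⟩
      rw [Set.mem_setOf_eq, sqv_support]
      exact (hbU b hb hdis).2.spanning
    · rw [mI, Ideal.span_le]
      rintro _ ⟨m, hm, rfl⟩
      obtain ⟨B, hB, hBm⟩ := Matroid.Spanning.exists_isBase_subset hm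
      obtain ⟨b, hb, hdis, rfl⟩ := hsplit B hB
      refine Ideal.mem_of_dvd _ ((mono_dvd K).2 ((sqv_le_iff _ m).2 (Finset.coe_subset.1 hBm)))
        (Ideal.subset_span ⟨squarefree_sqv K _, List.ofFn fun i => monomial (sqv (b i)) 1,
          by simp, ?_, ?_⟩)
      · intro f hf
        rw [List.mem_ofFn] at hf
        obtain ⟨i, rfl⟩ := hf
        exact hb i
      · rw [List.prod_ofFn, prod_sqv]
        intro i _ j _ h
        exact hdis i j h
  rw [hpow]
  exact qdepth_matroid K N hNE hloop (k * d) (Nat.mul_pos hk hd1) hNB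

end CombPart

/-- Let `I ⊂ S = K[x_1,…,x_n]` be a matroidal ideal generated in
degree `d` with `supp(I) = [n]`. Then all squarefree powers of `I` have minimum
depth: `depth(S/I^{[k]}) = kd − 1` for `1 ≤ k ≤ ν(I)`. -/
theorem sqPow_matroidal_min_depth {K : Type*} [Field K] {n : ℕ}
    (I : Ideal (MvPolynomial (Fin n) K)) (d : ℕ)
    (hmat : IsMatroidal K I)
    (hne : (minGens K I).Nonempty)
    (hdeg : ∀ u ∈ minGens K I, totalDegree u = d)
    (hsupp : ∀ i : Fin n, ∃ u ∈ minGens K I, X i ∣ u) :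
    ∀ k : ℕ, 1 ≤ k → k ≤ monNu K I → qdepth K (sqPow K I k) = k * d - 1 := by
  exact main_aux I d hmat hne hdeg hsupp
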